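/- Let q ≥ 2 and k ≥ 1 be integers and let f : {0,1}^q → {0,1} be a Boolean function such that (i) every deterministic kOBDD (with any variable order) representing f has width at least d, and (ii) there is a commutative deterministic kOBDD of width w representing f. Then there exists a total Boolean function g : {0,1}^n → {0,1}, with n = q(⌈log₂ q⌉+1), such that g agrees with the partial function ord(f) on its domain, every deterministic kOBDD (with any variable order) representing g has width at least d, and there is a deterministic kOBDD of width at most 2^{⌈log₂ q⌉}·w representing g. -/

import Mathlib

set_option maxHeartbeats 1000000
set_option linter.unusedVariables false
/-- `binVal l a = Σ_{j=1}^l a_j 2^{l-j}` (a₁ is the most significant bit). -/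
def binVal (l : ℕ) (a : Fin l → Bool) : ℕ :=
  ∑ j : Fin l, if a j then 2 ^ (l - 1 - (j : ℕ)) else 0
/-- A deterministic kOBDD of width `w` over `n` variables: `k` layers reading in order `ord`. -/
structure KOBDD (k n w : ℕ) where
  ord : Equiv.Perm (Fin n)
  tr : Fin k → Fin n → Fin w → Bool → Fin w
  start : Fin w
  acc : Finset (Fin w)

namespace KOBDD

def layerRun {k n w : ℕ} (M : KOBDD k n w) (t : Fin k) (s : Fin w) (x : Fin n → Bool) : Fin w :=
  (List.finRange n).foldl (fun a i => M.tr t i a (x (M.ord i))) s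

def final {k n w : ℕ} (M : KOBDD k n w) (x : Fin n → Bool) : Fin w :=
  (List.finRange k).foldl (fun s t => M.layerRun t s x) M.start

def Accepts {k n w : ℕ} (M : KOBDD k n w) (x : Fin n → Bool) : Prop :=
  M.final x ∈ M.acc

def Represents {k n w : ℕ} (M : KOBDD k n w) (f : (Fin n → Bool) → Bool) : Prop :=
  ∀ x, M.Accepts x ↔ f x = true

def RepresentsPartial {k n w : ℕ} (M : KOBDD k n w) (F : (Fin n → Bool) → Option Bool) : Prop :=
  ∀ x b, F x = some b → (M.Accepts x ↔ b = true)

/-- Each layer is a commutative OBDD: for every reading order `π`, the reordered layer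
(with transitions `tr' i = tr (ord⁻¹(π i))`) computes, from every start state,
the same state transformation as the original layer. -/
def Commutative {k n w : ℕ} (M : KOBDD k n w) : Prop :=
  ∀ (π : Equiv.Perm (Fin n)) (t : Fin k) (s : Fin w) (x : Fin n → Bool),
    (List.finRange n).foldl (fun a i => M.tr t (M.ord.symm (π i)) a (x (π i))) s =
      M.layerRun t s x

end KOBDD
lemma zIdx {q l : ℕ} (i : Fin q) (j : Fin l) : (i : ℕ) * l + (j : ℕ) < q * (l + 1) :=
  calc (i : ℕ) * l + (j : ℕ) < (i : ℕ) * l + l := Nat.add_lt_add_left j.isLt _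
    _ = ((i : ℕ) + 1) * l := by ring
    _ ≤ q * l := Nat.mul_le_mul i.isLt (Nat.le_refl l)
    _ ≤ q * (l + 1) := Nat.mul_le_mul (Nat.le_refl q) (Nat.le_succ l)

lemma yIdx {q l : ℕ} (i : Fin q) : q * l + (i : ℕ) < q * (l + 1) :=
  calc q * l + (i : ℕ) < q * l + q := Nat.add_lt_add_left i.isLt _
    _ = q * (l + 1) := by ring

/-- The bit `z_{i,j}` of an input to the reordered function
(layout: `z_{1,1},…,z_{q,l}, y_1,…,y_q`). -/
def zOf (q l : ℕ) (x : Fin (q * (l + 1)) → Bool) (i : Fin q) (j : Fin l) : Bool :=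
  x ⟨(i : ℕ) * l + (j : ℕ), zIdx i j⟩

/-- The value bit `y_i` of an input to the reordered function. -/
def yOf (q l : ℕ) (x : Fin (q * (l + 1)) → Bool) (i : Fin q) : Bool :=
  x ⟨q * l + (i : ℕ), yIdx i⟩

/-- `z_{1,j} ⊕ ⋯ ⊕ z_{i,j}`. -/
def xorZ (q l : ℕ) (x : Fin (q * (l + 1)) → Bool) (i : Fin q) (j : Fin l) : Bool :=
  decide ((Finset.univ.filter (fun i' : Fin q => i' ≤ i ∧ zOf q l x i' j = true)).card % 2 = 1)

/-- `θ(i) − 1` for the plain reordering. -/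
def addrOrd (q l : ℕ) (x : Fin (q * (l + 1)) → Bool) (i : Fin q) : ℕ :=
  binVal l (zOf q l x i)

/-- `θ(i) − 1` for the xor-reordering. -/
def addrXor (q l : ℕ) (x : Fin (q * (l + 1)) → Bool) (i : Fin q) : ℕ :=
  binVal l (xorZ q l x i)

/-- The partial reordered function: defined exactly when the addresses form a
permutation of `{1,…,q}`; then position `j` of `f`'s argument is `y_{θ⁻¹(j)}`. -/
noncomputable def ordPartial (q l : ℕ) (f : (Fin q → Bool) → Bool)
    (addr : (Fin (q * (l + 1)) → Bool) → Fin q → ℕ) :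
    (Fin (q * (l + 1)) → Bool) → Option Bool := fun x =>
  if h : ∃ σ : Equiv.Perm (Fin q), ∀ i, addr x i = (σ i : ℕ) then
    some (f fun j => yOf q l x (h.choose.symm j))
  else none

/-- The partial function `ord(f)`. -/
noncomputable def ordF (q : ℕ) (f : (Fin q → Bool) → Bool) :
    (Fin (q * (Nat.clog 2 q + 1)) → Bool) → Option Bool :=
  ordPartial q (Nat.clog 2 q) f (addrOrd q (Nat.clog 2 q))

/-- The partial function `⊕ord(f)`. -/
noncomputable def xorOrdF (q : ℕ) (f : (Fin q → Bool) → Bool) :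
    (Fin (q * (Nat.clog 2 q + 1)) → Bool) → Option Bool :=
  ordPartial q (Nat.clog 2 q) f (addrXor q (Nat.clog 2 q))

/-- Steps of a fold that read constants can be merged into the remaining steps. -/
lemma exists_foldl_filter {α S : Type*} [DecidableEq α] (P : α → Prop) [DecidablePred P]
    (c : α → Bool) (step : α → S → Bool → S) (L : List α) (hL : L.Nodup)
    (hne : ∃ a ∈ L, P a) :
    ∃ step' : α → S → Bool → S, ∀ (x : α → Bool), (∀ a, ¬ P a → x a = c a) → ∀ s,
      (L.filter P).foldl (fun s a => step' a s (x a)) s =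
        L.foldl (fun s a => step a s (x a)) s := by
  induction L with
  | nil => simp at hne
  | cons a L ih =>
    obtain ⟨haL, hL'⟩ := List.nodup_cons.1 hL
    have congr_update : ∀ (b : α) (L' : List α) (F : α → S → Bool → S) (G : S → Bool → S)
        (x : α → Bool) (s : S), b ∉ L' →
        L'.foldl (fun s a => Function.update F b G a s (x a)) s =
          L'.foldl (fun s a => F a s (x a)) s := by
      intro b L' F G x s hb
      refine List.foldl_ext _ _ _ fun s a' ha' => ?_
      have : a' ≠ b := fun h => hb (h ▸ ha')
      simp [Function.update_of_ne this]
    by_cases ha : P a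
    · by_cases hL2 : ∃ a ∈ L, P a
      · obtain ⟨step', h⟩ := ih hL' hL2
        refine ⟨Function.update step' a (step a), fun x hx s => ?_⟩
        rw [List.filter_cons_of_pos (by simpa using ha), List.foldl_cons, List.foldl_cons,
          congr_update _ _ _ _ _ _ (fun h => haL (List.mem_of_mem_filter h)), h x hx]
        simp
      · push Not at hL2
        refine ⟨fun a' s b => L.foldl (fun s a => step a s (c a)) (step a' s b),
          fun x hx s => ?_⟩
        have hf : L.filter P = [] := by simpa [List.filter_eq_nil_iff] using hL2
        rw [List.filter_cons_of_pos (by simpa using ha), hf]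
        simp only [List.foldl_cons, List.foldl_nil]
        refine List.foldl_ext _ _ _ fun s a' ha' => ?_
        rw [hx a' (hL2 a' ha')]
    · have hL2 : ∃ a ∈ L, P a := by
        obtain ⟨b, hb, hPb⟩ := hne
        rcases List.mem_cons.1 hb with rfl | hb
        · exact absurd hPb ha
        · exact ⟨b, hb, hPb⟩
      obtain ⟨step', h⟩ := ih hL' hL2
      obtain ⟨b, T, hT⟩ : ∃ b T, L.filter P = b :: T := by
        obtain ⟨b, hb, hPb⟩ := hL2
        exact List.exists_cons_of_ne_nil
          (List.ne_nil_of_mem (List.mem_filter.2 ⟨hb, by simpa using hPb⟩))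
      have hbT : b ∉ T := (List.nodup_cons.1 (hT ▸ hL'.filter _)).1
      refine ⟨Function.update step' b fun s v => step' b (step a s (c a)) v, fun x hx s => ?_⟩
      rw [List.filter_cons_of_neg (by simpa using ha), List.foldl_cons, ← h x hx, hT,
        List.foldl_cons, List.foldl_cons, congr_update _ _ _ _ _ _ hbT, hx a ha]
      simp

lemma List.Nodup.exists_perm_map_finRange {q : ℕ} (L : List (Fin q)) (hL : L.Nodup)
    (hmem : ∀ i, i ∈ L) : ∃ ρ : Equiv.Perm (Fin q), (List.finRange q).map ρ = L := by
  have hlen : L.length = q := by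
    simpa using Fintype.card_congr (hL.getEquivOfForallMemList L hmem)
  refine ⟨(finCongr hlen.symm).trans (hL.getEquivOfForallMemList L hmem), ?_⟩
  apply List.ext_getElem
  · simp [hlen]
  · intro i h1 h2
    simp [List.Nodup.getEquivOfForallMemList]

/-- Fixing all variables outside the range of `e` keeps the width. -/
lemma KOBDD.exists_restrict {k n q w : ℕ} (hq : 0 < q) (N : KOBDD k n w) (e : Fin q → Fin n)
    (he : Function.Injective e) (X : (Fin q → Bool) → Fin n → Bool)
    (hXe : ∀ y i, X y (e i) = y i)
    (hXc : ∀ y y' v, v ∉ Set.range e → X y v = X y' v) :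
    ∃ M : KOBDD k q w, ∀ y, M.Accepts y ↔ N.Accepts (X y) := by
  classical
  set V := (List.finRange n).map N.ord with hV
  have hVn : V.Nodup := (List.nodup_finRange n).map N.ord.injective
  have hVm : ∀ v, v ∈ V := fun v => List.mem_map.2 ⟨N.ord.symm v, by simp, by simp⟩
  have hstep := fun t : Fin k => exists_foldl_filter (· ∈ Set.range e) (X fun _ => false)
    (fun v s b => N.tr t (N.ord.symm v) s b) V hVn ⟨e ⟨0, hq⟩, hVm _, ⟨_, rfl⟩⟩
  choose step' hstep' using hstep
  obtain ⟨L, hL⟩ : ∃ L : List (Fin q), L.map e = V.filter (· ∈ Set.range e) := by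
    have : V.filter (· ∈ Set.range e) ∈ Set.range (List.map e) := by
      rw [Set.range_list_map]
      intro v hv
      simpa using (List.mem_filter.1 hv).2
    exact this
  have hLn : L.Nodup := List.Nodup.of_map e (hL ▸ hVn.filter _)
  have hLm : ∀ i, i ∈ L := by
    intro i
    have : e i ∈ L.map e := by rw [hL]; simp [hVm]
    obtain ⟨j, hj, hij⟩ := List.mem_map.1 this
    exact he hij ▸ hj
  obtain ⟨ρ, hρ⟩ := List.Nodup.exists_perm_map_finRange L hLn hLm
  let M : KOBDD k q w := ⟨ρ, fun t i s b => step' t (e (ρ i)) s b, N.start, N.acc⟩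
  have hlayer : ∀ t s y, M.layerRun t s y = N.layerRun t s (X y) := by
    intro t s y
    have h := hstep' t (X y) (fun v hv => hXc _ _ v hv) s
    rw [← hL, ← hρ, hV] at h
    simpa [List.foldl_map, hXe, KOBDD.layerRun, M] using h
  refine ⟨M, fun y => ?_⟩
  simp only [KOBDD.Accepts, KOBDD.final, hlayer]
  rfl

lemma binVal_surj (l : ℕ) : ∀ i < 2 ^ l, ∃ a : Fin l → Bool, binVal l a = i := by
  induction l with
  | zero => intro i hi; exact ⟨fun _ => false, by simp_all [binVal]⟩
  | succ l ih =>
    have hcons : ∀ b a, binVal (l + 1) (Fin.cons b a) = (if b then 2 ^ l else 0) + binVal l a := by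
      intro b a
      simp only [binVal, Fin.sum_univ_succ, Fin.cons_zero, Fin.cons_succ, Fin.val_zero,
        Fin.val_succ]
      congr 1
      refine Finset.sum_congr rfl fun j _ => ?_
      rw [show l + 1 - 1 - ((j : ℕ) + 1) = l - 1 - j by omega]
    intro i hi
    rw [pow_succ] at hi
    by_cases h : i < 2 ^ l
    · obtain ⟨a, ha⟩ := ih i h
      exact ⟨Fin.cons false a, by simp [hcons, ha]⟩
    · obtain ⟨a, ha⟩ := ih (i - 2 ^ l) (by omega)
      exact ⟨Fin.cons true a, by simp [hcons, ha]; omega⟩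

/-- The variable read at position `j` of block `i`, each block being `z_{i,1},…,z_{i,l}, y_i`. -/
def blockVar (q l : ℕ) (p : Fin q × Fin (l + 1)) : Fin (q * (l + 1)) :=
  if h : (p.2 : ℕ) < l then ⟨p.1 * l + p.2, zIdx p.1 ⟨p.2, h⟩⟩ else ⟨q * l + p.1, yIdx p.1⟩

lemma blockVar_bijective (q l : ℕ) : Function.Bijective (blockVar q l) := by
  rw [Fintype.bijective_iff_injective_and_card]
  refine ⟨?_, by simp⟩
  have hlt : ∀ (i : Fin q) (j : ℕ), j < l → (i : ℕ) * l + j < q * l := by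
    intro i j hj
    have : ((i : ℕ) + 1) * l ≤ q * l := Nat.mul_le_mul_right l i.isLt
    rw [add_mul] at this
    omega
  rintro ⟨i, j⟩ ⟨i', j'⟩ h
  simp only [blockVar] at h
  split_ifs at h with h1 h2 h2 <;> simp only [Fin.mk.injEq] at h
  · have hl : 0 < l := by omega
    have e1 := congrArg (· / l) h
    have e2 := congrArg (· % l) h
    simp only [mul_comm _ l, Nat.mul_add_div hl, Nat.mul_add_mod, Nat.div_eq_of_lt h1,
      Nat.div_eq_of_lt h2, Nat.mod_eq_of_lt h1, Nat.mod_eq_of_lt h2, add_zero] at e1 e2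
    exact Prod.ext (Fin.ext e1) (Fin.ext e2)
  · have := hlt i j h1; omega
  · have := hlt i' j' h2; omega
  · exact Prod.ext (Fin.ext (by simp; omega)) (Fin.ext (by simp; omega))

noncomputable def blockEquiv (q l : ℕ) : Fin q × Fin (l + 1) ≃ Fin (q * (l + 1)) :=
  Equiv.ofBijective _ (blockVar_bijective q l)

lemma blockEquiv_castSucc {q l : ℕ} (i : Fin q) (j : Fin l) :
    blockEquiv q l (i, j.castSucc) = ⟨i * l + j, zIdx i j⟩ := by
  simp [blockEquiv, blockVar]

lemma blockEquiv_last {q l : ℕ} (i : Fin q) :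
    blockEquiv q l (i, Fin.last l) = ⟨q * l + i, yIdx i⟩ := by
  simp [blockEquiv, blockVar]

lemma foldl_finRange_mul {S : Type*} (m n : ℕ) (F : S → Fin m × Fin n → S) (s : S) :
    (List.finRange (m * n)).foldl (fun s p => F s (finProdFinEquiv.symm p)) s =
      (List.finRange m).foldl
        (fun s i => (List.finRange n).foldl (fun s j => F s (i, j)) s) s := by
  have h : List.finRange (m * n) =
      (List.finRange m).flatMap fun i => (List.finRange n).map fun j => finProdFinEquiv (i, j) := by
    rw [← List.ofFn_id, List.ofFn_mul, ← List.map_id (List.flatten _)]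
    simp only [List.flatMap, List.ofFn_eq_map, List.map_id]
    congr 1
    refine List.map_congr_left fun i _ => List.map_congr_left fun j _ => ?_
    ext
    simp [finProdFinEquiv, mul_comm, add_comm]
  rw [h, List.foldl_flatMap]
  simp only [List.foldl_map, Equiv.symm_apply_apply]

lemma foldl_update_finRange {l : ℕ} {S : Type*} (v a : Fin l → Bool) (s : S) :
    (List.finRange l).foldl (fun p j => (Function.update p.1 j (v j), p.2)) (a, s) = (v, s) := by
  have key : ∀ (L : List (Fin l)) (a : Fin l → Bool),
      L.foldl (fun p j => (Function.update p.1 j (v j), p.2)) (a, s) =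
        (fun j => if j ∈ L then v j else a j, s) := by
    intro L
    induction L with
    | nil => simp
    | cons b L ih =>
      intro a
      rw [List.foldl_cons, ih]
      refine Prod.ext (funext fun j => ?_) rfl
      by_cases hj : j = b <;> by_cases hL : j ∈ L <;> simp_all
  simp [key]

namespace KOBDD

variable {k q w : ℕ}

/-- Read the bit of the variable with address `a`, ignoring invalid addresses. -/
def addrStep (M : KOBDD k q w) (l : ℕ) (t : Fin k) (a : Fin l → Bool) (s : Fin w) (b : Bool) :
    Fin w :=
  if h : binVal l a < q then M.tr t (M.ord.symm ⟨binVal l a, h⟩) s b else s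

/-- The final state when `M` reads the bits `y_i` at the addresses given by `z_i`. -/
def reorderFinal (M : KOBDD k q w) (l : ℕ) (x : Fin (q * (l + 1)) → Bool) : Fin w :=
  (List.finRange k).foldl (fun s t => (List.finRange q).foldl
    (fun s i => M.addrStep l t (zOf q l x i) s (yOf q l x i)) s) M.start

/-- Under a permutation of addresses, the reordered run of a commutative kOBDD is the run on the
permuted input. -/
lemma Commutative.reorderFinal_eq {M : KOBDD k q w} (hM : M.Commutative) {l : ℕ}
    {x : Fin (q * (l + 1)) → Bool} {σ : Equiv.Perm (Fin q)}
    (hσ : ∀ i, addrOrd q l x i = (σ i : ℕ)) :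
    M.reorderFinal l x = M.final fun j => yOf q l x (σ.symm j) := by
  unfold reorderFinal final
  congr 1
  funext s t
  rw [← hM σ]
  congr 1
  funext s i
  have h : binVal l (zOf q l x i) = (σ i : ℕ) := hσ i
  simp [addrStep, h]

/-- A step of the block-reading program on the pair (address register, state of `M`). -/
def blockStep (M : KOBDD k q w) (l : ℕ) (t : Fin k) (j : Fin (l + 1))
    (p : (Fin l → Bool) × Fin w) (b : Bool) : (Fin l → Bool) × Fin w :=
  if h : (j : ℕ) < l then (Function.update p.1 ⟨j, h⟩ b, p.2) else (p.1, M.addrStep l t p.1 p.2 b)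

lemma exists_final_eq_reorderFinal (M : KOBDD k q w) (l : ℕ) :
    ∃ N : KOBDD k (q * (l + 1)) (2 ^ l * w),
      ∀ x, N.Accepts x ↔ M.reorderFinal l x ∈ M.acc := by
  classical
  let E : (Fin l → Bool) × Fin w ≃ Fin (2 ^ l * w) :=
    Fintype.equivFinOfCardEq (by simp)
  let N : KOBDD k (q * (l + 1)) (2 ^ l * w) :=
    { ord := finProdFinEquiv.symm.trans (blockEquiv q l)
      tr := fun t p st b => E (M.blockStep l t (finProdFinEquiv.symm p).2 (E.symm st) b)
      start := E (fun _ => false, M.start)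
      acc := Finset.univ.filter fun st => (E.symm st).2 ∈ M.acc }
  have hblock : ∀ t x i (p : (Fin l → Bool) × Fin w),
      (List.finRange (l + 1)).foldl
        (fun p j => M.blockStep l t j p (x (blockEquiv q l (i, j)))) p =
      (zOf q l x i, M.addrStep l t (zOf q l x i) p.2 (yOf q l x i)) := by
    rintro t x i ⟨a, s⟩
    rw [List.finRange_succ_last, List.foldl_append, List.foldl_map]
    have := foldl_update_finRange (zOf q l x i) a s
    simp only [zOf] at this
    simp [blockStep, blockEquiv_castSucc, blockEquiv_last, this, yOf]
  have hlayer : ∀ t x st, (E.symm (N.layerRun t st x)).2 = (List.finRange q).foldl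
      (fun s i => M.addrStep l t (zOf q l x i) s (yOf q l x i)) (E.symm st).2 := by
    intro t x st
    have h1 : E.symm (N.layerRun t st x) = (List.finRange (q * (l + 1))).foldl (fun p i =>
        M.blockStep l t (finProdFinEquiv.symm i).2 p
          (x (blockEquiv q l (finProdFinEquiv.symm i)))) (E.symm st) := by
      unfold layerRun
      exact (List.foldl_hom E.symm (by simp [N])).symm
    rw [h1, foldl_finRange_mul q (l + 1)
      (fun p ij => M.blockStep l t ij.2 p (x (blockEquiv q l ij)))]
    simp only [hblock]
    exact (List.foldl_hom Prod.snd (by simp)).symm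
  refine ⟨N, fun x => ?_⟩
  have hfinal : (E.symm (N.final x)).2 = M.reorderFinal l x := by
    have hstart : M.start = (E.symm N.start).2 := by simp [N]
    unfold final reorderFinal
    rw [hstart]
    exact (List.foldl_hom (fun st => (E.symm st).2) (fun st t => (hlayer t x st).symm)).symm
  rw [← hfinal]
  simp [Accepts, N]

end KOBDD

/-- total extension of `ord(f)` with the same lower bound and a
kOBDD of width `2^{⌈log₂ q⌉}·w`. -/
theorem stmt2 (k q d w : ℕ) (hk : 1 ≤ k) (hq : 2 ≤ q)
    (f : (Fin q → Bool) → Bool)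
    (hlow : ∀ (w' : ℕ) (M : KOBDD k q w'), M.Represents f → d ≤ w')
    (M : KOBDD k q w) (hrep : M.Represents f) (hcomm : M.Commutative) :
    ∃ g : (Fin (q * (Nat.clog 2 q + 1)) → Bool) → Bool,
      (∀ x b, ordF q f x = some b → g x = b) ∧
      (∀ (w' : ℕ) (N : KOBDD k (q * (Nat.clog 2 q + 1)) w'), N.Represents g → d ≤ w') ∧
      (∃ w' : ℕ, w' ≤ 2 ^ Nat.clog 2 q * w ∧
          ∃ N : KOBDD k (q * (Nat.clog 2 q + 1)) w', N.Represents g) := by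
  classical
  let l := Nat.clog 2 q
  refine ⟨fun x => decide (M.reorderFinal l x ∈ M.acc), ?_, ?_, _, le_rfl, ?_⟩
  · intro x b hx
    unfold ordF ordPartial at hx
    split_ifs at hx with h
    rw [Option.some.injEq] at hx
    rw [← hx, Bool.eq_iff_iff, decide_eq_true_iff, hcomm.reorderFinal_eq h.choose_spec]
    exact hrep _
  · intro w' N hN
    have hA : ∀ i : Fin q, ∃ a : Fin l → Bool, binVal l a = i := fun i =>
      binVal_surj l i (i.isLt.trans_le (Nat.le_pow_clog one_lt_two q))
    choose A hA using hA
    let X : (Fin q → Bool) → Fin (q * (l + 1)) → Bool := fun y v =>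
      Fin.lastCases (motive := fun _ => Bool) (y ((blockEquiv q l).symm v).1)
        (A ((blockEquiv q l).symm v).1) ((blockEquiv q l).symm v).2
    have hXz : ∀ y i, zOf q l (X y) i = A i := by
      intro y i
      funext j
      simp [zOf, X, ← blockEquiv_castSucc]
    have hXy : ∀ y i, yOf q l (X y) i = y i := by
      intro y i
      simp [yOf, X, ← blockEquiv_last]
    obtain ⟨M', hM'⟩ := N.exists_restrict (by omega)
      (fun i => blockEquiv q l (i, Fin.last l))
      (fun i i' h => by simpa using h) X (fun y i => by simp [X]) (by
        intro y y' v hv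
        obtain ⟨⟨i, j⟩, rfl⟩ := (blockEquiv q l).surjective v
        induction j using Fin.lastCases with
        | last => exact absurd ⟨i, rfl⟩ hv
        | cast j => simp [X])
    refine hlow w' M' fun y => ?_
    have hfin : M.reorderFinal l (X y) = M.final y := by
      rw [hcomm.reorderFinal_eq (σ := Equiv.refl _) (fun i => by simp [addrOrd, hXz, hA])]
      simp [hXy]
    rw [hM' y, hN (X y), decide_eq_true_iff, hfin]
    exact hrep y
  · obtain ⟨N, hN⟩ := M.exists_final_eq_reorderFinal l
    exact ⟨N, fun x => by simp [hN]⟩
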